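/- Let X be a set and let S : [0,∞) → (X → X) satisfy the semigroup properties S(0) = id and S(t+s) = S(t) ∘ S(s) for all t, s ≥ 0. Let E : X → [0,∞), let Q : [0,∞) → [0,∞) be nondecreasing, and let ω : [0,∞) → (0,∞) be nonincreasing. Assume that for every x ∈ X and every t ≥ 0 one has E(S(t)x) ≤ Q(E(x)) · exp(−ω(E(x)) t). Then there exist a constant ω₀ > 0 and a nondecreasing function Q₀ : [0,∞) → [0,∞) such that E(S(t)x) ≤ Q₀(E(x)) · exp(−ω₀ t) for every x ∈ X and every t ≥ 0. -/

import Mathlib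

/-!
Once the energy has fallen below a fixed level `r`, monotonicity of `Q` and `ω` turns the decay
estimate into one with constants `Q r` and `ω r`. A trajectory of initial energy `e` is below this
level at time `T = Q e / (r * ω e)`, since `q * exp (-(q / r)) ≤ r`. Restarting the semigroup at
time `T` gives the rate `ω r`; the initial layer `[0, T]` only costs a factor `exp (ω r * T)`, which
depends monotonically on `e`.
-/

open Real Set

/-- Exponential decay of the energy `E` along `S`, with amplitude `Q` and rate `ω` depending on the
initial energy. A universal rate is encoded by a constant function `ω`. -/
def HasEnergyDecay {X : Type*} (S : ℝ → X → X) (E : X → ℝ) (Q ω : ℝ → ℝ) : Prop :=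
  ∀ (x : X) (t : ℝ), 0 ≤ t → E (S t x) ≤ Q (E x) * exp (-(ω (E x)) * t)

/-- A time by which the decay estimate brings a trajectory of initial energy `e` down to energy at
most `r`. It is not the optimal such time `log (Q e / r) / ω e`, but is nonnegative without case
distinction. -/
noncomputable def entryTime (Q ω : ℝ → ℝ) (r e : ℝ) : ℝ :=
  Q e / (r * ω e)

/-- The amplitude of the decay estimate with universal rate `ω r`, as a function of the initial
energy `e`. -/
noncomputable def uniformAmplitude (Q ω : ℝ → ℝ) (r e : ℝ) : ℝ :=
  max (Q e) (Q r) * exp (ω r * entryTime Q ω r e)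

theorem mul_exp_neg_div_le {r : ℝ} (hr : 0 < r) (q : ℝ) : q * exp (-(q / r)) ≤ r := by
  have hq : q / r ≤ exp (q / r) := (lt_add_one _).le.trans (add_one_le_exp _)
  rwa [exp_neg, ← div_eq_mul_inv, div_le_comm₀ (exp_pos _) hr]

theorem le_max_mul_exp_of_le_of_le_mul_exp_sub {u A B T c t : ℝ} (hA : 0 ≤ A) (hc : 0 ≤ c)
    (before : t ≤ T → u ≤ A) (after : T ≤ t → u ≤ B * exp (-c * (t - T))) :
    u ≤ max A B * exp (c * T) * exp (-c * t) := by
  have hexp : exp (c * T) * exp (-c * t) = exp (-c * (t - T)) := by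
    rw [← exp_add]
    ring_nf
  rw [mul_assoc, hexp]
  rcases le_total t T with htT | hTt
  · have hone : 1 ≤ exp (-c * (t - T)) :=
      one_le_exp (mul_nonneg_of_nonpos_of_nonpos (neg_nonpos.2 hc) (sub_nonpos.2 htT))
    calc
      u ≤ A := before htT
      _ ≤ max A B := le_max_left A B
      _ ≤ max A B * exp (-c * (t - T)) :=
        le_mul_of_one_le_right (hA.trans (le_max_left A B)) hone
  · exact (after hTt).trans (by gcongr; exact le_max_right A B)

section Amplitude

variable {Q ω : ℝ → ℝ} {s : Set ℝ} {r : ℝ}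

theorem entryTime_nonneg {e : ℝ} (hr : 0 ≤ r) (hQ : 0 ≤ Q e) (hω : 0 ≤ ω e) :
    0 ≤ entryTime Q ω r e :=
  div_nonneg hQ (mul_nonneg hr hω)

theorem monotoneOn_entryTime (hr : 0 < r) (hQ : MonotoneOn Q s) (hQ₀ : ∀ e ∈ s, 0 ≤ Q e)
    (hω : AntitoneOn ω s) (hω₀ : ∀ e ∈ s, 0 < ω e) : MonotoneOn (entryTime Q ω r) s :=
  fun _ ha b hb hab =>
    div_le_div₀ (hQ₀ b hb) (hQ ha hb hab) (mul_pos hr (hω₀ b hb))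
      (mul_le_mul_of_nonneg_left (hω ha hb hab) hr.le)

theorem uniformAmplitude_nonneg {e : ℝ} (hQ : 0 ≤ Q e) : 0 ≤ uniformAmplitude Q ω r e :=
  mul_nonneg (le_max_of_le_left hQ) (exp_pos _).le

theorem monotoneOn_uniformAmplitude (hr : 0 < r) (hωr : 0 ≤ ω r) (hQ : MonotoneOn Q s)
    (hQ₀ : ∀ e ∈ s, 0 ≤ Q e) (hω : AntitoneOn ω s) (hω₀ : ∀ e ∈ s, 0 < ω e) :
    MonotoneOn (uniformAmplitude Q ω r) s := by
  intro a ha b hb hab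
  have hT : entryTime Q ω r a ≤ entryTime Q ω r b :=
    monotoneOn_entryTime hr hQ hQ₀ hω hω₀ ha hb hab
  have hmax : max (Q a) (Q r) ≤ max (Q b) (Q r) := max_le_max_right _ (hQ ha hb hab)
  exact mul_le_mul hmax (exp_le_exp.2 (mul_le_mul_of_nonneg_left hT hωr)) (exp_pos _).le
    (le_max_of_le_left (hQ₀ b hb))

end Amplitude

namespace HasEnergyDecay

variable {X : Type*} {S : ℝ → X → X} {E : X → ℝ} {Q ω : ℝ → ℝ} {r t : ℝ} {x : X}

theorem le_amplitude (h : HasEnergyDecay S E Q ω) (hQ : 0 ≤ Q (E x)) (hω : 0 ≤ ω (E x))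
    (ht : 0 ≤ t) : E (S t x) ≤ Q (E x) :=
  (h x t ht).trans <| mul_le_of_le_one_right hQ <|
    exp_le_one_iff.2 <| mul_nonpos_of_nonpos_of_nonneg (neg_nonpos.2 hω) ht

theorem le_of_energy_le {s : Set ℝ} (h : HasEnergyDecay S E Q ω) (hQ : MonotoneOn Q s)
    (hω : AntitoneOn ω s) (hx : E x ∈ s) (hr : r ∈ s) (hQr : 0 ≤ Q r) (hxr : E x ≤ r)
    (ht : 0 ≤ t) : E (S t x) ≤ Q r * exp (-(ω r) * t) :=
  calc
    E (S t x) ≤ Q (E x) * exp (-(ω (E x)) * t) := h x t ht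
    _ ≤ Q r * exp (-(ω r) * t) := by
      gcongr
      exacts [hQ hx hr hxr, hω hx hr hxr]

theorem energy_entryTime_le (h : HasEnergyDecay S E Q ω) (hr : 0 < r) (hQ : 0 ≤ Q (E x))
    (hω : 0 < ω (E x)) : E (S (entryTime Q ω r (E x)) x) ≤ r := by
  have hexponent : -(ω (E x)) * entryTime Q ω r (E x) = -(Q (E x) / r) := by
    unfold entryTime
    field_simp
  calc
    E (S (entryTime Q ω r (E x)) x)
        ≤ Q (E x) * exp (-(ω (E x)) * entryTime Q ω r (E x)) :=
      h x _ (entryTime_nonneg hr.le hQ hω.le)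
    _ = Q (E x) * exp (-(Q (E x) / r)) := by rw [hexponent]
    _ ≤ r := mul_exp_neg_div_le hr _

theorem uniform_rate (h : HasEnergyDecay S E Q ω)
    (hSadd : ∀ t s : ℝ, 0 ≤ t → 0 ≤ s → S (t + s) = S t ∘ S s) (hE : ∀ x, 0 ≤ E x)
    (hQ : MonotoneOn Q (Ici 0)) (hQ₀ : ∀ e, 0 ≤ e → 0 ≤ Q e)
    (hω : AntitoneOn ω (Ici 0)) (hω₀ : ∀ e, 0 ≤ e → 0 < ω e) (hr : 0 < r) :
    HasEnergyDecay S E (uniformAmplitude Q ω r) (fun _ => ω r) := by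
  intro x t ht
  have hQx := hQ₀ _ (hE x)
  have hωx := hω₀ _ (hE x)
  set T := entryTime Q ω r (E x)
  have hT : 0 ≤ T := entryTime_nonneg hr.le hQx hωx.le
  refine le_max_mul_exp_of_le_of_le_mul_exp_sub hQx (hω₀ r hr.le).le
    (fun _ => h.le_amplitude hQx hωx.le ht) fun hTt => ?_
  have hrestart : S t x = S (t - T) (S T x) := by
    rw [← Function.comp_apply (f := S (t - T)), ← hSadd _ _ (sub_nonneg.2 hTt) hT,
      sub_add_cancel]
  rw [hrestart]
  exact h.le_of_energy_le hQ hω (hE _) hr.le (hQ₀ r hr.le) (h.energy_entryTime_le hr hQx hωx)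
    (sub_nonneg.2 hTt)

end HasEnergyDecay

theorem semigroup_decay_upgrade_general
    {X : Type*} {S : ℝ → X → X}
    (hSadd : ∀ t s : ℝ, 0 ≤ t → 0 ≤ s → S (t + s) = S t ∘ S s)
    {E : X → ℝ} (hE : ∀ x, 0 ≤ E x)
    {Q : ℝ → ℝ} (hQmono : MonotoneOn Q (Ici 0)) (hQpos : ∀ e, 0 ≤ e → 0 ≤ Q e)
    {ω : ℝ → ℝ} (hωanti : AntitoneOn ω (Ici 0)) (hωpos : ∀ e, 0 ≤ e → 0 < ω e)
    (hdecay : HasEnergyDecay S E Q ω) {r : ℝ} (hr : 0 < r) :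
    ∃ Q₀ : ℝ → ℝ, MonotoneOn Q₀ (Ici 0) ∧ (∀ e, 0 ≤ e → 0 ≤ Q₀ e) ∧
      HasEnergyDecay S E Q₀ (fun _ => ω r) :=
  ⟨uniformAmplitude Q ω r,
    monotoneOn_uniformAmplitude hr (hωpos r hr.le).le hQmono hQpos hωanti hωpos,
    fun e he => uniformAmplitude_nonneg (hQpos e he),
    hdecay.uniform_rate hSadd hE hQmono hQpos hωanti hωpos hr⟩

/-- The standard trick of semigroup theory: an exponential decay estimate for the energy
whose rate `ω` deteriorates (nonincreasingly) with the size of the initial energy can be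
upgraded to an exponential decay estimate with a universal rate `ω₀`. -/
theorem semigroup_decay_upgrade
    {X : Type*} (S : ℝ → X → X)
    (hS0 : S 0 = id)
    (hSadd : ∀ t s : ℝ, 0 ≤ t → 0 ≤ s → S (t + s) = S t ∘ S s)
    (E : X → ℝ) (hE : ∀ x, 0 ≤ E x)
    (Q : ℝ → ℝ) (hQmono : MonotoneOn Q (Set.Ici 0)) (hQpos : ∀ x, 0 ≤ x → 0 ≤ Q x)
    (ω : ℝ → ℝ) (hωanti : AntitoneOn ω (Set.Ici 0)) (hωpos : ∀ x, 0 ≤ x → 0 < ω x)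
    (hdecay : ∀ (x : X) (t : ℝ), 0 ≤ t →
        E (S t x) ≤ Q (E x) * Real.exp (-(ω (E x)) * t)) :
    ∃ (ω₀ : ℝ) (Q₀ : ℝ → ℝ), 0 < ω₀ ∧ MonotoneOn Q₀ (Set.Ici 0) ∧
      (∀ x, 0 ≤ x → 0 ≤ Q₀ x) ∧
      ∀ (x : X) (t : ℝ), 0 ≤ t → E (S t x) ≤ Q₀ (E x) * Real.exp (-ω₀ * t) := by
  obtain ⟨Q₀, hQ₀⟩ := semigroup_decay_upgrade_general hSadd hE hQmono hQpos hωanti hωpos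
    hdecay one_pos
  exact ⟨ω 1, Q₀, hωpos 1 zero_le_one, hQ₀⟩
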